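/- Let A be a unital C*-algebra, B ⊆ A a C*-subalgebra containing the unit, and Φ : A → A a contractive linear projection onto B (i.e. Φ² = Φ, ‖Φ‖ ≤ 1, Φ(A) = B). Then Φ is a conditional expectation: Φ is positive and Φ(b₁ a b₂) = b₁ Φ(a) b₂ for all b₁, b₂ ∈ B and a ∈ A. -/

import Mathlib

section Tomiyama

variable {A : Type*} [CStarAlgebra A] {B : StarSubalgebra ℂ A} {Φ : A →ₗ[ℂ] A}

theorem abs_le_norm_of_mem_spectrum {x : A} {r : ℝ} (hr : r ∈ spectrum ℝ x) : |r| ≤ ‖x‖ := by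
  rcases subsingleton_or_nontrivial A with _ | _
  · simp at hr
  · exact spectrum.norm_le_norm_of_mem hr

/-- The second order defect of left `p`-linearity of `Φ` at `a`. -/
noncomputable def leftDefect (Φ : A →ₗ[ℂ] A) (a p : A) : A :=
  p * p * Φ a - (2 : ℂ) • (p * Φ (p * a)) + Φ (p * p * a)

theorem norm_leftDefect_le (hΦ : ∀ a, ‖Φ a‖ ≤ ‖a‖) (a p : A) :
    ‖leftDefect Φ a p‖ ≤ 4 * ‖p‖ ^ 2 * ‖a‖ := by
  have h1 : ‖p * p * Φ a‖ ≤ ‖p‖ * ‖p‖ * ‖a‖ :=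
    (norm_mul_le _ _).trans (mul_le_mul (norm_mul_le _ _) (hΦ a) (norm_nonneg _) (by positivity))
  have h2 : ‖(2 : ℂ) • (p * Φ (p * a))‖ ≤ 2 * (‖p‖ * (‖p‖ * ‖a‖)) := by
    rw [norm_smul, Complex.norm_ofNat]
    gcongr
    refine (norm_mul_le _ _).trans ?_
    gcongr
    exact (hΦ _).trans (norm_mul_le _ _)
  have h3 : ‖Φ (p * p * a)‖ ≤ ‖p‖ * ‖p‖ * ‖a‖ :=
    (hΦ _).trans ((norm_mul_le _ _).trans (by gcongr; exact norm_mul_le _ _))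
  calc ‖leftDefect Φ a p‖ ≤ ‖p * p * Φ a‖ + ‖(2 : ℂ) • (p * Φ (p * a))‖ + ‖Φ (p * p * a)‖ :=
        (norm_add_le _ _).trans (by gcongr; exact norm_sub_le _ _)
    _ ≤ 4 * ‖p‖ ^ 2 * ‖a‖ := by linarith

theorem leftDefect_add (a : A) {p r : A} (h : Commute p r) :
    leftDefect Φ a (p + r) = leftDefect Φ a p + leftDefect Φ a r +
      (2 : ℂ) • (p * r * Φ a - p * Φ (r * a) - r * Φ (p * a) + Φ (p * r * a)) := by
  simp only [leftDefect, add_mul, mul_add, map_add, ← h.eq, smul_add, smul_sub, two_smul]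
  abel

theorem leftDefect_smul (a p : A) (c : ℂ) :
    leftDefect Φ a (c • p) = c ^ 2 • leftDefect Φ a p := by
  simp only [leftDefect, smul_mul_assoc, mul_smul_comm, map_smul, smul_add, smul_sub, smul_smul]
  simp only [sq, mul_comm, mul_assoc]

/-- If the second order defect of a contraction `Φ` vanishes at a unitary `u`, then `Φ` is left
`u`-linear. -/
theorem map_unitary_mul (hΦ : ∀ a, ‖Φ a‖ ≤ ‖a‖) {u : A} (hu : u ∈ unitary A)
    (hdef : ∀ a, leftDefect Φ a u = 0) (a : A) : Φ (u * a) = u * Φ a := by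
  have hpow (n : ℕ) (a : A) : Φ (u ^ (n + 1) * a) =
      u ^ (n + 1) * Φ a + ((n : ℂ) + 1) • (u ^ n * (Φ (u * a) - u * Φ a)) := by
    induction n generalizing a with
    | zero => simp
    | succ n ih =>
      have hd : Φ (u * (u * a)) - u * Φ (u * a) = u * (Φ (u * a) - u * Φ a) := by
        have := hdef a
        rw [leftDefect, two_smul] at this
        rw [← sub_eq_zero, ← this]
        simp only [mul_sub, mul_assoc]
        abel
      have hs : u ^ (n + 1 + 1) * a = u ^ (n + 1) * (u * a) := by rw [pow_succ, mul_assoc]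
      rw [hs, ih (u * a), hd, pow_succ u (n + 1)]
      push_cast
      rw [add_smul ((n : ℂ) + 1), one_smul, ← mul_assoc (u ^ n), ← pow_succ]
      simp only [mul_sub, mul_assoc]
      abel
  have hupow (n : ℕ) (x : A) : ‖u ^ n * x‖ = ‖x‖ :=
    CStarRing.norm_coe_unitary_mul ⟨u ^ n, pow_mem hu n⟩ x
  have key (n : ℕ) : ‖Φ (u * a) - u * Φ a‖ ≤ 2 * ‖a‖ * (1 / ((n : ℝ) + 1)) := by
    have h1 : ((n : ℂ) + 1) • (u ^ n * (Φ (u * a) - u * Φ a)) =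
        Φ (u ^ (n + 1) * a) - u ^ (n + 1) * Φ a := by rw [hpow n a]; abel
    have h2 : ‖Φ (u ^ (n + 1) * a) - u ^ (n + 1) * Φ a‖ ≤ ‖a‖ + ‖a‖ := by
      refine (norm_sub_le _ _).trans (add_le_add ?_ ?_)
      · exact (hΦ _).trans (hupow _ _).le
      · rw [hupow]; exact hΦ a
    have h3 : ‖(n : ℂ) + 1‖ = (n : ℝ) + 1 := by exact_mod_cast Complex.norm_natCast (n + 1)
    rw [← h1, norm_smul, hupow, h3] at h2
    rw [mul_one_div, le_div_iff₀ (by positivity)]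
    linarith
  have hlim := (tendsto_one_div_add_atTop_nhds_zero_nat (𝕜 := ℝ)).const_mul (2 * ‖a‖)
  rw [mul_zero] at hlim
  exact sub_eq_zero.mp (norm_le_zero_iff.mp (ge_of_tendsto' hlim key))

/-- A unital contraction maps self-adjoint elements to self-adjoint elements. -/
theorem isSelfAdjoint_map_of_unital_contraction (hone : Φ 1 = 1)
    (hΦ : ∀ a, ‖Φ a‖ ≤ ‖a‖) {a : A} (ha : IsSelfAdjoint a) : IsSelfAdjoint (Φ a) := by
  have key (t : ℝ) : ‖((imaginaryPart (Φ a) : selfAdjoint A) : A) + algebraMap ℝ A t‖ ^ 2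
      ≤ ‖a‖ ^ 2 + t ^ 2 := by
    set x : A := a + (t * Complex.I) • (1 : A) with hx
    have him : imaginaryPart (Φ x) = imaginaryPart (Φ a) + t • (1 : selfAdjoint A) := by
      have h2 : realPart (1 : A) = 1 := by
        ext; exact (IsSelfAdjoint.one A).coe_realPart
      simp [hx, hone, mul_smul, h2]
    have hle : ‖((imaginaryPart (Φ x) : selfAdjoint A) : A)‖ ≤ ‖x‖ :=
      (imaginaryPart.norm_le (Φ x)).trans (hΦ x)
    have hstar : star x * x = a * a + (t ^ 2) • (1 : A) := by
      simp only [hx, star_add, ha.star_eq, star_smul, star_one, add_mul, mul_add, smul_mul_assoc,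
        mul_smul_comm, one_mul, mul_one, smul_add, smul_smul]
      have : star ((t : ℂ) * Complex.I) = -(t * Complex.I) := by simp
      rw [this]
      have h3 : t * Complex.I * -(t * Complex.I) = ((t ^ 2 : ℝ) : ℂ) := by
        push_cast
        linear_combination (-(t : ℂ) ^ 2) * Complex.I_mul_I
      rw [h3, Complex.coe_smul, neg_smul]
      abel
    have hnx : ‖x‖ ^ 2 ≤ ‖a‖ ^ 2 + t ^ 2 := by
      rw [sq, ← CStarRing.norm_star_mul_self, hstar]
      refine (norm_add_le _ _).trans (add_le_add ?_ ?_)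
      · rw [sq]; exact norm_mul_le _ _
      · rw [norm_smul, Real.norm_of_nonneg (sq_nonneg t)]
        rcases subsingleton_or_nontrivial A with _ | _
        · simp [Subsingleton.elim (1 : A) 0, sq_nonneg]
        · simp
    rw [him] at hle
    refine le_trans ?_ hnx
    refine pow_le_pow_left₀ (norm_nonneg _) ?_ 2
    simpa [Algebra.algebraMap_eq_smul_one] using hle
  set y : selfAdjoint A := imaginaryPart (Φ a) with hy
  have hy0 : (y : A) = 0 := by
    refine CFC.eq_zero_of_spectrum_subset_zero (R := ℝ) (p := IsSelfAdjoint) (y : A) ?_ y.2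
    intro l hl
    have hl' (t : ℝ) : (l + t) ^ 2 ≤ ‖a‖ ^ 2 + t ^ 2 := by
      refine le_trans ?_ (key t)
      have hmem : l + t ∈ spectrum ℝ ((y : A) + algebraMap ℝ A t) := by
        rw [add_comm (y : A)]
        exact spectrum.add_mem_add_iff.mpr hl
      have := abs_le_norm_of_mem_spectrum hmem
      rw [← sq_abs]
      exact pow_le_pow_left₀ (abs_nonneg _) this 2
    by_contra hne
    have hne : l ≠ 0 := hne
    have := hl' (‖a‖ ^ 2 / l)
    have h4 : l * (‖a‖ ^ 2 / l) = ‖a‖ ^ 2 := by field_simp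
    have h5 : 0 < l ^ 2 := by positivity
    nlinarith [sq_nonneg ‖a‖]
  rw [← realPart_add_I_smul_imaginaryPart (Φ a), ← hy, hy0, smul_zero, add_zero]
  exact (realPart (Φ a)).2

/-- A unital contraction commutes with the star operation. -/
theorem map_star_of_unital_contraction (hone : Φ 1 = 1)
    (hΦ : ∀ a, ‖Φ a‖ ≤ ‖a‖) (a : A) : Φ (star a) = star (Φ a) := by
  have hr := isSelfAdjoint_map_of_unital_contraction hone hΦ (realPart a).2
  have hi := isSelfAdjoint_map_of_unital_contraction hone hΦ (imaginaryPart a).2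
  conv_lhs => rw [← realPart_add_I_smul_imaginaryPart a]
  conv_rhs => rw [← realPart_add_I_smul_imaginaryPart a]
  simp [hr.star_eq, hi.star_eq]

variable [PartialOrder A] [StarOrderedRing A]

/-- A unital contraction is positive. -/
theorem map_nonneg_of_unital_contraction (hone : Φ 1 = 1)
    (hΦ : ∀ a, ‖Φ a‖ ≤ ‖a‖) {a : A} (ha : 0 ≤ a) : 0 ≤ Φ a := by
  have hsa : IsSelfAdjoint (Φ a) :=
    isSelfAdjoint_map_of_unital_contraction hone hΦ (.of_nonneg ha)
  have hmap : Φ (algebraMap ℝ A ‖a‖ - a) = algebraMap ℝ A ‖a‖ - Φ a := by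
    rw [map_sub, Algebra.algebraMap_eq_smul_one, LinearMap.map_smul_of_tower, hone]
  have hle : ‖algebraMap ℝ A ‖a‖ - a‖ ≤ ‖a‖ := by
    rw [CStarAlgebra.norm_le_iff_le_algebraMap _ (norm_nonneg a)
      (sub_nonneg.mpr (IsSelfAdjoint.of_nonneg ha).le_algebraMap_norm_self)]
    exact sub_le_self _ ha
  have hsa' : IsSelfAdjoint (algebraMap ℝ A ‖a‖ - Φ a) :=
    (IsSelfAdjoint.algebraMap A (.all _)).sub hsa
  have h := hsa'.le_algebraMap_norm_self
  have h' : algebraMap ℝ A ‖algebraMap ℝ A ‖a‖ - Φ a‖ ≤ algebraMap ℝ A ‖a‖ :=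
    algebraMap_mono A (hmap ▸ (hΦ _).trans hle)
  simpa using h.trans h'

/-- A contractive projection onto a C⋆-subalgebra `B` preserves being annihilated on the left by a
positive contraction of `B`. -/
theorem mul_map_eq_zero_of_nonneg (hΦ : ∀ a, ‖Φ a‖ ≤ ‖a‖) (hfix : ∀ b ∈ B, Φ b = b)
    (hmem : ∀ a, Φ a ∈ B) {q x : A} (hq : q ∈ B) (hq0 : 0 ≤ q) (hq1 : ‖q‖ ≤ 1)
    (hqx : q * x = 0) : q * Φ x = 0 := by
  set y := q * Φ x with hy
  have hyB : y ∈ B := mul_mem hq (hmem x)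
  have hqsa : IsSelfAdjoint q := .of_nonneg hq0
  have hxq : star x * q = 0 := by
    have := congrArg star hqx
    simpa [hqsa.star_eq] using this
  have key (t : ℝ) (ht : 0 ≤ t) : (1 + t) ^ 2 * ‖y‖ ^ 2 ≤ ‖x‖ ^ 2 + t ^ 2 * ‖y‖ ^ 2 := by
    have hspec : ∀ s ∈ spectrum ℝ q, 0 ≤ s ∧ s ≤ 1 := fun s hs ↦
      ⟨spectrum_nonneg_of_nonneg hq0 hs, (le_abs_self s).trans
        ((abs_le_norm_of_mem_spectrum hs).trans hq1)⟩
    have hpos : ∀ s ∈ spectrum ℝ q, 1 + t * s ≠ 0 := fun s hs ↦ by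
      have := mul_nonneg ht (hspec s hs).1
      positivity
    set k : A := cfc (fun s : ℝ ↦ (1 + t) * s / (1 + t * s)) q with hk
    have hkn : ‖k‖ ≤ 1 := by
      refine norm_cfc_le zero_le_one fun s hs ↦ ?_
      obtain ⟨h0, h1⟩ := hspec s hs
      have h2 := mul_nonneg ht h0
      rw [Real.norm_of_nonneg (by positivity), div_le_one (by positivity)]
      nlinarith
    have hcont : ContinuousOn (fun s : ℝ ↦ (1 + t) * s / (1 + t * s)) (spectrum ℝ q) :=
      ContinuousOn.div (by fun_prop) (by fun_prop) hpos
    have hkq : k * (1 + t • q) = (1 + t) • q := by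
      have h1 : cfc (fun s : ℝ ↦ 1 + t * s) q = 1 + t • q := by
        rw [cfc_add .., cfc_const_one .., cfc_const_mul .., cfc_id' ..]
      have h2 : cfc (fun s : ℝ ↦ (1 + t) * s) q = (1 + t) • q := by
        rw [cfc_const_mul .., cfc_id' ..]
      rw [← h1, ← h2, hk, ← cfc_mul _ _ q hcont (by fun_prop)]
      exact cfc_congr fun s hs ↦ div_mul_cancel₀ _ (hpos s hs)
    have hky : k * Φ (x + t • y) = (1 + t) • y := by
      rw [map_add, LinearMap.map_smul_of_tower, hfix y hyB, hy, ← smul_mul_assoc (1 + t), ← hkq]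
      simp [mul_add, add_mul, mul_assoc]
    have hnorm : (1 + t) * ‖y‖ ≤ ‖x + t • y‖ := by
      calc (1 + t) * ‖y‖ = ‖k * Φ (x + t • y)‖ := by
            rw [hky, norm_smul, Real.norm_of_nonneg (by positivity)]
        _ ≤ ‖k‖ * ‖Φ (x + t • y)‖ := norm_mul_le _ _
        _ ≤ 1 * ‖x + t • y‖ := by gcongr; exact hΦ _
        _ = _ := one_mul _
    have hxy : star x * y = 0 := by rw [hy, ← mul_assoc, hxq, zero_mul]
    have hyx : star y * x = 0 := by simpa using congrArg star hxy
    have hexp : star (x + t • y) * (x + t • y) = star x * x + t ^ 2 • (star y * y) := by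
      simp [add_mul, mul_add, hxy, hyx, smul_smul, sq]
    calc (1 + t) ^ 2 * ‖y‖ ^ 2 = ((1 + t) * ‖y‖) ^ 2 := by ring
      _ ≤ ‖x + t • y‖ ^ 2 := by gcongr
      _ = ‖star x * x + t ^ 2 • (star y * y)‖ := by rw [← hexp, CStarRing.norm_star_mul_self, sq]
      _ ≤ ‖star x * x‖ + ‖t ^ 2 • (star y * y)‖ := norm_add_le _ _
      _ = ‖x‖ ^ 2 + t ^ 2 * ‖y‖ ^ 2 := by
        rw [norm_smul, CStarRing.norm_star_mul_self, CStarRing.norm_star_mul_self,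
          Real.norm_of_nonneg (sq_nonneg t), sq ‖x‖, sq ‖y‖]
  by_contra hne
  have hypos : 0 < ‖y‖ ^ 2 := by
    have := norm_pos_iff.mpr hne
    positivity
  have h := key (‖x‖ ^ 2 / ‖y‖ ^ 2) (by positivity)
  have h' : ‖x‖ ^ 2 / ‖y‖ ^ 2 * ‖y‖ ^ 2 = ‖x‖ ^ 2 := by field_simp
  nlinarith [sq_nonneg ‖x‖]

/-- A contractive projection onto a C⋆-subalgebra `B` preserves being annihilated on the left by an
element of `B`. -/
theorem mul_map_eq_zero (hΦ : ∀ a, ‖Φ a‖ ≤ ‖a‖) (hfix : ∀ b ∈ B, Φ b = b)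
    (hmem : ∀ a, Φ a ∈ B) {q x : A} (hq : q ∈ B) (hqx : q * x = 0) : q * Φ x = 0 := by
  rcases eq_or_ne q 0 with rfl | hq0
  · simp
  set r : A := (‖q‖ ^ 2)⁻¹ • (star q * q) with hr
  have hqn : ‖q‖ ≠ 0 := norm_ne_zero_iff.mpr hq0
  have hrB : r ∈ B := by
    rw [hr, ← Complex.coe_smul]
    exact B.smul_mem (mul_mem (star_mem hq) hq) _
  have hrx : r * Φ x = 0 := by
    refine mul_map_eq_zero_of_nonneg hΦ hfix hmem hrB
      (smul_nonneg (by positivity) (star_mul_self_nonneg q)) ?_ ?_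
    · rw [hr, norm_smul, CStarRing.norm_star_mul_self, Real.norm_of_nonneg (by positivity)]
      exact le_of_eq (by field_simp)
    · rw [hr, smul_mul_assoc, mul_assoc, hqx, mul_zero, smul_zero]
  have hqq : star q * q * Φ x = 0 := by
    rw [hr, smul_mul_assoc] at hrx
    exact (smul_eq_zero.mp hrx).resolve_left (by positivity)
  rw [← CStarRing.star_mul_self_eq_zero_iff, star_mul, mul_assoc, ← mul_assoc (star q), hqq,
    mul_zero]

theorem norm_leftDefect_le_of_nonneg [IsClosed (B : Set A)] (hΦ : ∀ a, ‖Φ a‖ ≤ ‖a‖)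
    (hfix : ∀ b ∈ B, Φ b = b) (hmem : ∀ a, Φ a ∈ B) (a : A) {h : ℝ} (hh : 0 ≤ h) (n : ℕ) {p : A}
    (hp : p ∈ B) (hp0 : 0 ≤ p) (hpn : ‖p‖ ≤ n * h) :
    ‖leftDefect Φ a p‖ ≤ n * (4 * h ^ 2 * ‖a‖) := by
  induction n generalizing p with
  | zero =>
    have : p = 0 := by simpa using hpn
    simp [this, leftDefect]
  | succ n ih =>
    have hspec : ∀ s ∈ spectrum ℝ p, 0 ≤ s ∧ s ≤ (n + 1) * h := fun s hs ↦
      ⟨spectrum_nonneg_of_nonneg hp0 hs, (le_abs_self s).trans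
        ((abs_le_norm_of_mem_spectrum hs).trans (by exact_mod_cast hpn))⟩
    set q : A := cfc (fun s : ℝ ↦ max (s - h) 0) p with hq
    set r : A := cfc (fun s : ℝ ↦ min s h) p with hr
    have hqB : q ∈ B := cfc_mem (𝕜' := ℂ) _ hp
    have hrB : r ∈ B := cfc_mem (𝕜' := ℂ) _ hp
    have hpqr : p = q + r := by
      rw [hq, hr, ← cfc_add ..]
      nth_rw 1 [← cfc_id' ℝ p]
      refine cfc_congr fun s _ ↦ ?_
      rcases le_total s h with hs | hs <;> simp [hs]
    have hcomm : Commute q r := cfc_commute_cfc ..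
    have hqr : q * r = (h : ℂ) • q := by
      rw [hq, hr, ← cfc_mul .., Complex.coe_smul, ← cfc_const_mul ..]
      refine cfc_congr fun s _ ↦ ?_
      rcases le_total s h with hs | hs <;> simp [hs, mul_comm]
    have hhr : (h : ℂ) • 1 - r ∈ B := sub_mem (B.smul_mem (one_mem B) _) hrB
    have hrn : ‖r‖ ≤ h := norm_cfc_le hh fun s hs ↦ by
      rw [Real.norm_of_nonneg (le_min (hspec s hs).1 hh)]
      exact min_le_right _ _
    have hqn : ‖q‖ ≤ n * h := norm_cfc_le (by positivity) fun s hs ↦ by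
      rw [Real.norm_of_nonneg (le_max_right _ _)]
      exact max_le (by linarith [(hspec s hs).2]) (by positivity)
    have hz1 : q * Φ (((h : ℂ) • 1 - r) * a) = 0 :=
      mul_map_eq_zero hΦ hfix hmem hqB (by
        rw [← mul_assoc, mul_sub, hqr, mul_smul_comm, mul_one, sub_self, zero_mul])
    have hz2 : ((h : ℂ) • 1 - r) * Φ (q * a) = 0 :=
      mul_map_eq_zero hΦ hfix hmem hhr (by
        rw [← mul_assoc, sub_mul, ← hcomm.eq, hqr, smul_mul_assoc, one_mul, sub_self, zero_mul])
    have hcross : q * r * Φ a - q * Φ (r * a) - r * Φ (q * a) + Φ (q * r * a) = 0 := by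
      rw [hqr, smul_mul_assoc, smul_mul_assoc, map_smul]
      simp only [sub_mul, smul_mul_assoc, one_mul, map_sub, map_smul, mul_sub,
        mul_smul_comm] at hz1 hz2
      rw [hz1, zero_sub, add_comm, ← sub_eq_add_neg, hz2]
    calc ‖leftDefect Φ a p‖ = ‖leftDefect Φ a q + leftDefect Φ a r‖ := by
          rw [hpqr, leftDefect_add a hcomm, hcross, smul_zero, add_zero]
      _ ≤ ‖leftDefect Φ a q‖ + ‖leftDefect Φ a r‖ := norm_add_le _ _
      _ ≤ n * (4 * h ^ 2 * ‖a‖) + 4 * h ^ 2 * ‖a‖ := by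
        refine add_le_add (ih hqB (cfc_nonneg fun _ _ ↦ le_max_right _ _) hqn)
          ((norm_leftDefect_le hΦ a r).trans ?_)
        gcongr
      _ = (n + 1 : ℕ) * (4 * h ^ 2 * ‖a‖) := by push_cast; ring

theorem leftDefect_eq_zero_of_nonneg [IsClosed (B : Set A)] (hΦ : ∀ a, ‖Φ a‖ ≤ ‖a‖)
    (hfix : ∀ b ∈ B, Φ b = b) (hmem : ∀ a, Φ a ∈ B) (a : A) {p : A} (hp : p ∈ B) (hp0 : 0 ≤ p) :
    leftDefect Φ a p = 0 := by
  have key (n : ℕ) : ‖leftDefect Φ a p‖ ≤ 4 * ‖p‖ ^ 2 * ‖a‖ * (1 / ((n : ℝ) + 1)) := by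
    refine (norm_leftDefect_le_of_nonneg hΦ hfix hmem a (h := ‖p‖ / (n + 1)) (by positivity)
      (n + 1) hp hp0 (le_of_eq ?_)).trans (le_of_eq ?_) <;>
    · push_cast
      field_simp
  have hlim :=
    (tendsto_one_div_add_atTop_nhds_zero_nat (𝕜 := ℝ)).const_mul (4 * ‖p‖ ^ 2 * ‖a‖)
  rw [mul_zero] at hlim
  exact norm_le_zero_iff.mp (ge_of_tendsto' hlim key)

theorem leftDefect_eq_zero_of_isSelfAdjoint [IsClosed (B : Set A)] (hΦ : ∀ a, ‖Φ a‖ ≤ ‖a‖)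
    (hfix : ∀ b ∈ B, Φ b = b) (hmem : ∀ a, Φ a ∈ B) (a : A) {b : A} (hb : b ∈ B)
    (hsa : IsSelfAdjoint b) : leftDefect Φ a b = 0 := by
  set c : A := (‖b‖ : ℂ) • (1 : A) with hc
  have hcB : c ∈ B := B.smul_mem (one_mem B) _
  have hbc : 0 ≤ b + c := by
    have := hsa.neg_algebraMap_norm_le_self
    rw [Algebra.algebraMap_eq_smul_one] at this
    rw [hc, Complex.coe_smul]
    exact neg_le_iff_add_nonneg.mp this
  have hc0 : 0 ≤ c := by
    rw [hc, Complex.coe_smul]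
    exact smul_nonneg (norm_nonneg b) zero_le_one
  have hcomm : Commute b c := (Commute.one_right b).smul_right _
  have hsum := leftDefect_add (Φ := Φ) a hcomm
  rw [leftDefect_eq_zero_of_nonneg hΦ hfix hmem a (add_mem hb hcB) hbc,
    leftDefect_eq_zero_of_nonneg hΦ hfix hmem a hcB hc0] at hsum
  simpa [hc] using hsum.symm

theorem map_mul_of_isSelfAdjoint_of_norm_le_one [IsClosed (B : Set A)] (hΦ : ∀ a, ‖Φ a‖ ≤ ‖a‖)
    (hfix : ∀ b ∈ B, Φ b = b) (hmem : ∀ a, Φ a ∈ B) {b : A} (hb : b ∈ B) (hsa : IsSelfAdjoint b)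
    (hb1 : ‖b‖ ≤ 1) (a : A) : Φ (b * a) = b * Φ a := by
  set s : A := cfc (fun x : ℝ ↦ √(1 - x ^ 2)) b with hs
  have hsB : s ∈ B := cfc_mem (𝕜' := ℂ) _ hb
  have hssa : IsSelfAdjoint s := cfc_predicate _ _
  have hcomm : Commute b s := by
    have := cfc_commute_cfc (fun x : ℝ ↦ x) (fun x : ℝ ↦ √(1 - x ^ 2)) b
    rwa [cfc_id' ℝ b] at this
  have hsq : b * b + s * s = 1 := by
    have h1 : cfc (fun x : ℝ ↦ x * x) b = b * b := by rw [cfc_mul .., cfc_id' ..]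
    rw [← h1, hs, ← cfc_mul .., ← cfc_add .., ← cfc_const_one ℝ b]
    refine cfc_congr fun x hx ↦ ?_
    have hx1 : |x| ≤ 1 := (abs_le_norm_of_mem_spectrum hx).trans hb1
    have : 0 ≤ 1 - x ^ 2 := by
      have := (sq_le_one_iff_abs_le_one x).mpr hx1
      linarith
    simp only [Real.mul_self_sqrt this]
    ring
  have hunit (c : ℂ) (hc : c ^ 2 = -1) (hcs : star c = -c) : Φ (b * a) + c • Φ (s * a) =
      b * Φ a + c • (s * Φ a) := by
    have hcc : c * c = -1 := by rw [← sq, hc]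
    have hcomm' : Commute b (c • s) := hcomm.smul_right c
    have hu : b + c • s ∈ unitary A := by
      rw [Unitary.mem_iff]
      constructor <;>
      · simp only [star_add, star_smul, hsa.star_eq, hssa.star_eq, hcs, add_mul, mul_add,
          smul_mul_assoc, mul_smul_comm, smul_add, smul_neg, smul_smul, neg_mul, mul_neg, hcc, neg_neg, one_smul,
          ← hcomm.eq, neg_smul]
        rw [← hsq]
        abel
    have h := map_unitary_mul hΦ hu (fun x ↦ ?_) a
    · simpa [add_mul] using h
    · have hb0 := leftDefect_eq_zero_of_isSelfAdjoint hΦ hfix hmem x hb hsa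
      have hs0 := leftDefect_eq_zero_of_isSelfAdjoint hΦ hfix hmem x hsB hssa
      have hbs0 := leftDefect_eq_zero_of_isSelfAdjoint hΦ hfix hmem x (add_mem hb hsB)
        (hsa.add hssa)
      rw [leftDefect_add x hcomm, hb0, hs0, add_zero, zero_add, smul_eq_zero] at hbs0
      have hcross := hbs0.resolve_left two_ne_zero
      rw [leftDefect_add x hcomm', leftDefect_smul, hb0, hs0]
      simp only [smul_mul_assoc, mul_smul_comm, map_smul, ← smul_sub, ← smul_add, hcross,
        smul_zero, add_zero]
  have hI := hunit Complex.I Complex.I_sq (by simp)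
  have hnegI := hunit (-Complex.I) (by simp) (by simp)
  have h2 : (2 : ℂ) • Φ (b * a) = (2 : ℂ) • (b * Φ a) := by
    have := congrArg₂ (· + ·) hI hnegI
    simp only [neg_smul] at this
    rw [two_smul, two_smul]
    calc _ = _ := by abel
      _ = _ := this
      _ = _ := by abel
  exact smul_right_injective A (two_ne_zero (α := ℂ)) h2

/-- A contractive projection onto a C⋆-subalgebra `B` is left `B`-linear. -/
theorem map_mul_of_mem [IsClosed (B : Set A)] (hΦ : ∀ a, ‖Φ a‖ ≤ ‖a‖)
    (hfix : ∀ b ∈ B, Φ b = b) (hmem : ∀ a, Φ a ∈ B) {b : A} (hb : b ∈ B) (a : A) :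
    Φ (b * a) = b * Φ a := by
  have hselfAdjoint {c : A} (hc : c ∈ B) (hsa : IsSelfAdjoint c) : Φ (c * a) = c * Φ a := by
    rcases eq_or_ne c 0 with rfl | hc0
    · simp
    have hn : (‖c‖ : ℂ) ≠ 0 := by simpa using hc0
    have h := map_mul_of_isSelfAdjoint_of_norm_le_one hΦ hfix hmem
      (b := (‖c‖ : ℂ)⁻¹ • c) (B.smul_mem hc _)
      (by
        rw [← Complex.ofReal_inv, Complex.coe_smul]
        exact (IsSelfAdjoint.all _).smul hsa)
      (by
        rw [norm_smul, norm_inv, Complex.norm_real, norm_norm]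
        exact inv_mul_le_one) a
    rw [smul_mul_assoc, smul_mul_assoc, map_smul] at h
    exact smul_right_injective A (inv_ne_zero hn) h
  have hre : ((realPart b : selfAdjoint A) : A) ∈ B := by
    rw [realPart_apply_coe, ← Complex.coe_smul]
    exact B.smul_mem (add_mem hb (star_mem hb)) _
  have him : ((imaginaryPart b : selfAdjoint A) : A) ∈ B := by
    rw [imaginaryPart_apply_coe, ← Complex.coe_smul (2⁻¹ : ℝ)]
    exact B.smul_mem (B.smul_mem (sub_mem hb (star_mem hb)) _) _
  rw [← realPart_add_I_smul_imaginaryPart b, add_mul, add_mul, smul_mul_assoc, smul_mul_assoc,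
    map_add, map_smul, hselfAdjoint hre (realPart b).2, hselfAdjoint him (imaginaryPart b).2]

end Tomiyama

/-- **Tomiyama's theorem.** Let `A` be a unital C*-algebra, `B ⊆ A` a
C*-subalgebra containing the unit, and `Φ : A → A` a contractive linear projection onto `B`
(`Φ² = Φ`, `‖Φ‖ ≤ 1`, `Φ(A) = B`).  Then `Φ` is a conditional expectation: `Φ` is positive
and `Φ(b₁ a b₂) = b₁ Φ(a) b₂` for all `b₁, b₂ ∈ B` and `a ∈ A`. -/
theorem tomiyama_contractive_projection_is_conditional_expectation
    {A : Type*} [NormedRing A] [StarRing A] [CStarRing A] [NormedAlgebra ℂ A]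
    [StarModule ℂ A] [PartialOrder A] [StarOrderedRing A] [CompleteSpace A]
    (B : StarSubalgebra ℂ A)
    (Φ : A →L[ℂ] A) (hidem : Φ.comp Φ = Φ) (hnorm : ‖Φ‖ ≤ 1)
    (hrange : Set.range Φ = (B : Set A)) :
    (∀ a : A, 0 ≤ a → 0 ≤ Φ a) ∧
      ∀ b₁ b₂ a : A, b₁ ∈ B → b₂ ∈ B → Φ (b₁ * a * b₂) = b₁ * Φ a * b₂ := by
  let _ : CStarAlgebra A :=
    { ‹NormedRing A›, ‹StarRing A›, ‹CompleteSpace A›, ‹CStarRing A›, ‹NormedAlgebra ℂ A›,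
      ‹StarModule ℂ A› with }
  have hΦ (a : A) : ‖Φ a‖ ≤ ‖a‖ := by simpa using Φ.le_of_opNorm_le hnorm a
  have hmem (a : A) : Φ a ∈ B := by
    have : Φ a ∈ (B : Set A) := hrange ▸ Set.mem_range_self a
    exact this
  have hfix (b : A) (hb : b ∈ B) : Φ b = b := by
    have hb' : b ∈ Set.range Φ := hrange ▸ hb
    obtain ⟨x, rfl⟩ := hb'
    exact DFunLike.congr_fun hidem x
  have hone : Φ 1 = 1 := hfix 1 (one_mem B)
  have hBeq : (B : Set A) = {x | Φ x = x} :=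
    Set.ext fun x ↦ ⟨hfix x, fun hx ↦ hx ▸ hmem x⟩
  have : IsClosed (B : Set A) := hBeq ▸ isClosed_eq Φ.continuous continuous_id
  have hleft {b : A} (hb : b ∈ B) (a : A) : Φ (b * a) = b * Φ a :=
    map_mul_of_mem (Φ := (Φ : A →ₗ[ℂ] A)) hΦ hfix hmem hb a
  have hstar (a : A) : Φ (star a) = star (Φ a) :=
    map_star_of_unital_contraction (Φ := (Φ : A →ₗ[ℂ] A)) hone hΦ a
  have hright {b : A} (hb : b ∈ B) (a : A) : Φ (a * b) = Φ a * b := by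
    rw [← star_star (a * b), hstar, star_mul, hleft (star_mem hb), hstar, star_mul, star_star,
      star_star]
  refine ⟨fun a ha ↦ map_nonneg_of_unital_contraction (Φ := (Φ : A →ₗ[ℂ] A)) hone hΦ ha,
    fun b₁ b₂ a hb₁ hb₂ ↦ ?_⟩
  rw [hright hb₂, hleft hb₁]
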